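/- Let q be a prime power, k, h ≥ 2, and V a kh-dimensional F_q-vector space. If P is a pseudo-arc of PG(kh-1,q) = PG(V), i.e. a set of h-dimensional F_q-subspaces of V any k of which span V, then |P| ≤ q^h + k if q is even, and |P| ≤ q^h + k - 1 if q is odd. -/

import Mathlib

/-!
Project a pseudo-arc `P` from the span of `k - 2` of its elements. The remaining elements have
pairwise complementary images of dimension `h` in a quotient of dimension `2h`, that is, they form
a partial spread. Fix one image `W₀` and a vector `v ∉ W₀`: every other image meets the coset
`v + W₀`, and distinct images meet it in distinct points because `0 ∉ v + W₀`. So there are at most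
`|W₀| + 1 = q ^ h + 1` images, whence `|P| ≤ (q ^ h + 1) + (k - 2)`.
-/

open Module

section PartialSpread

theorem natCard_le_of_pairwise_disjoint_of_codisjoint {R M ι : Type*} [Ring R] [AddCommGroup M]
    [Module R M] {U : Submodule R M} [Finite U] (hU : U ≠ ⊤) {W : ι → Submodule R M}
    (hdisj : Pairwise (Function.onFun Disjoint W)) (hcodisj : ∀ i, Codisjoint (W i) U) :
    Nat.card ι ≤ Nat.card U := by
  obtain ⟨v, hv⟩ : ∃ v, v ∉ U := SetLike.exists_not_mem_of_ne_top U hU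
  have meets_coset (i : ι) : ∃ u : U, v + u ∈ W i := by
    obtain ⟨w, hw, u, hu, hwu⟩ :=
      Submodule.mem_sup.mp ((hcodisj i).eq_top ▸ Submodule.mem_top : v ∈ W i ⊔ U)
    exact ⟨-⟨u, hu⟩, by simpa [← hwu] using hw⟩
  choose u hu using meets_coset
  refine Nat.card_le_card_of_injective u fun i j huij => ?_
  by_contra hij
  have hzero : v + u i = 0 := Submodule.disjoint_def.mp (hdisj hij) _ (hu i) (huij ▸ hu j)
  exact hv (eq_neg_of_add_eq_zero_left hzero ▸ U.neg_mem (u i).2)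

variable {K V : Type*} [DivisionRing K] [AddCommGroup V] [Module K V] [FiniteDimensional K V]

theorem disjoint_of_codisjoint_of_finrank_add_le {A B : Submodule K V} (hAB : Codisjoint A B)
    (hle : finrank K A + finrank K B ≤ finrank K V) : Disjoint A B := by
  have hdim := Submodule.finrank_sup_add_finrank_inf_eq A B
  rw [hAB.eq_top, finrank_top] at hdim
  exact disjoint_iff.mpr (Submodule.finrank_eq_zero.mp (by lia))

theorem finrank_sSup_le_ncard_mul {S : Set (Submodule K V)} (hS : S.Finite) {h : ℕ}
    (hle : ∀ W ∈ S, finrank K W ≤ h) : finrank K (sSup S : Submodule K V) ≤ S.ncard * h := by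
  induction S, hS using Set.Finite.induction_on with
  | empty => simp
  | @insert W S hW hS ih =>
    rw [sSup_insert, Set.ncard_insert_of_notMem hW hS]
    calc finrank K (W ⊔ sSup S : Submodule K V)
        ≤ finrank K W + finrank K (sSup S : Submodule K V) :=
          Submodule.finrank_add_le_finrank_add_finrank W (sSup S)
      _ ≤ h + S.ncard * h :=
          add_le_add (hle W (Set.mem_insert W S))
            (ih fun W' hW' => hle W' (Set.mem_insert_of_mem W hW'))
      _ = (S.ncard + 1) * h := by ring

theorem natCard_le_of_pairwise_codisjoint [Finite K] {ι : Type*} [Finite ι] {h : ℕ} (hh : 0 < h)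
    (hV : 2 * h ≤ finrank K V) {W : ι → Submodule K V} (hW : ∀ i, finrank K (W i) ≤ h)
    (hcodisj : Pairwise (Function.onFun Codisjoint W)) : Nat.card ι ≤ Nat.card K ^ h + 1 := by
  have : Finite V := Module.finite_of_finite K
  obtain _ | ⟨⟨i₀⟩⟩ := isEmpty_or_nonempty ι
  · simp
  have hne_top : W i₀ ≠ ⊤ := fun htop => by
    have := hW i₀
    rw [htop, finrank_top] at this
    lia
  have hdisj : Pairwise (Function.onFun Disjoint W) := fun i j hij =>
    disjoint_of_codisjoint_of_finrank_add_le (hcodisj hij) (by linarith [hW i, hW j])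
  have hothers : Nat.card ({i₀}ᶜ : Set ι) ≤ Nat.card (W i₀) :=
    natCard_le_of_pairwise_disjoint_of_codisjoint hne_top (W := fun i : ({i₀}ᶜ : Set ι) => W i)
      (hdisj.comp_of_injective Subtype.val_injective) fun i => hcodisj i.2
  calc Nat.card ι = Nat.card ({i₀}ᶜ : Set ι) + 1 := by
        rw [← Set.ncard_add_ncard_compl {i₀}, Set.ncard_singleton, add_comm,
          Nat.card_coe_set_eq]
    _ ≤ Nat.card (W i₀) + 1 := by gcongr
    _ = Nat.card K ^ finrank K (W i₀) + 1 := by rw [Module.natCard_eq_pow_finrank (K := K)]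
    _ ≤ Nat.card K ^ h + 1 := by
        gcongr
        · exact Nat.card_pos
        · exact hW i₀

end PartialSpread

/-- A pseudo-arc of `PG(kh - 1, K) = PG(V)`: a set of `h`-dimensional subspaces of the
`kh`-dimensional space `V`, any `k` of which span `V`. -/
structure IsPseudoArc {K V : Type*} [DivisionRing K] [AddCommGroup V] [Module K V] (k h : ℕ)
    (P : Set (Submodule K V)) : Prop where
  finrank_space : finrank K V = k * h
  finrank_eq : ∀ W ∈ P, finrank K W = h
  sSup_eq_top : ∀ T ⊆ P, T.ncard = k → sSup T = ⊤

namespace IsPseudoArc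

variable {K V : Type*} [DivisionRing K] [AddCommGroup V] [Module K V] {k h : ℕ}
  {P S : Set (Submodule K V)}

theorem codisjoint_map_mkQ_sSup (hP : IsPseudoArc k h P) (hSP : S ⊆ P) (hS : S.Finite)
    (hSk : S.ncard + 2 = k) {A B : Submodule K V} (hA : A ∈ P \ S) (hB : B ∈ P \ S) (hAB : A ≠ B) :
    Codisjoint (A.map (sSup S).mkQ) (B.map (sSup S).mkQ) := by
  have hsub : insert A (insert B S) ⊆ P :=
    Set.insert_subset hA.1 (Set.insert_subset hB.1 hSP)
  have hcard : (insert A (insert B S)).ncard = k := by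
    rw [Set.ncard_insert_of_notMem (by simp [hAB, hA.2]) (hS.insert B),
      Set.ncard_insert_of_notMem hB.2 hS, ← hSk]
  have hspan := hP.sSup_eq_top _ hsub hcard
  rw [sSup_insert, sSup_insert, ← sup_assoc, sup_comm] at hspan
  rwa [codisjoint_iff, ← Submodule.map_sup, Submodule.map_mkQ_eq_top]

theorem two_mul_le_finrank_quotient_sSup [FiniteDimensional K V] (hP : IsPseudoArc k h P)
    (hSP : S ⊆ P) (hS : S.Finite) (hSk : S.ncard + 2 = k) :
    2 * h ≤ finrank K (V ⧸ sSup S) := by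
  have hquot := Submodule.finrank_quotient_add_finrank (sSup S)
  have hsup := finrank_sSup_le_ncard_mul hS fun W hW => (hP.finrank_eq W (hSP hW)).le
  rw [hP.finrank_space, ← hSk, add_mul] at hquot
  lia

end IsPseudoArc

theorem stmt17_general {K V : Type*} [DivisionRing K] [Finite K] [AddCommGroup V] [Module K V]
    {k h : ℕ} (hk : 2 ≤ k) (hh : 0 < h) {P : Set (Submodule K V)} (hP : IsPseudoArc k h P) :
    P.ncard ≤ Nat.card K ^ h + k - 1 := by
  have : FiniteDimensional K V :=
    Module.finite_of_finrank_pos (by rw [hP.finrank_space]; positivity)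
  have : Finite V := Module.finite_of_finite K
  have hpow : 0 < Nat.card K ^ h := pow_pos Nat.card_pos h
  obtain hsmall | hlarge := lt_or_ge P.ncard k
  · lia
  obtain ⟨S, hSP, hS⟩ := Set.exists_subset_card_eq (show k - 2 ≤ P.ncard by lia)
  have hSk : S.ncard + 2 = k := by lia
  have hrest : Nat.card ↥(P \ S) ≤ Nat.card K ^ h + 1 :=
    natCard_le_of_pairwise_codisjoint hh
      (hP.two_mul_le_finrank_quotient_sSup hSP S.toFinite hSk)
      (W := fun A : ↥(P \ S) => A.1.map (sSup S).mkQ)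
      (fun A => (Submodule.finrank_map_le _ _).trans (hP.finrank_eq A A.2.1).le)
      fun A B hAB => hP.codisjoint_map_mkQ_sSup hSP S.toFinite hSk A.2 B.2
        (Subtype.coe_injective.ne hAB)
  have hsplit : (P \ S).ncard + S.ncard = P.ncard := Set.ncard_sdiff_add_ncard_of_subset hSP
  rw [Nat.card_coe_set_eq] at hrest
  lia

/-- **Thas' bound.** If `P` is a pseudo-arc of `PG(kh-1, q)`, i.e. a
set of `h`-dimensional `F_q`-subspaces of a `kh`-dimensional `F_q`-vector space `V`
any `k` of which span `V`, then `|P| ≤ q^h + k` if `q` is even and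
`|P| ≤ q^h + k - 1` if `q` is odd. -/
theorem stmt17 (q k h : ℕ) (hq : IsPrimePow q) (hk : 2 ≤ k) (hh : 2 ≤ h)
    (F : Type) [Field F] [Fintype F] (hF : Fintype.card F = q)
    (V : Type) [AddCommGroup V] [Module F V] (hV : Module.finrank F V = k * h)
    (P : Set (Submodule F V))
    (hrk : ∀ W ∈ P, Module.finrank F W = h)
    (hsp : ∀ T ⊆ P, T.ncard = k → sSup T = ⊤) :
    (Even q → P.ncard ≤ q ^ h + k) ∧ (Odd q → P.ncard ≤ q ^ h + k - 1) := by
  have hbound := stmt17_general hk (by lia) (IsPseudoArc.mk hV hrk hsp)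
  rw [Nat.card_eq_fintype_card, hF] at hbound
  exact ⟨fun _ => by lia, fun _ => hbound⟩
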